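/- Let p be a prime, let k be a perfect field of characteristic p, let A = k[[z₁, …, z_d]] be a power series ring in d ≥ 1 variables over k, and let A^+ be the absolute integral closure of A. Let J ⊆ W(A^+) be the ideal generated by p and the Teichmüller lifts [z₁], …, [z_d] of the variables. Then W(A^+) is J-adically separated: ⋂_{n ≥ 1} J^n = 0. -/

import Mathlib

noncomputable section

instance mvPowerSeriesIsDomain (k : Type*) [Field k] (d : ℕ) :
    IsDomain (MvPowerSeries (Fin d) k) :=
  NoZeroDivisors.to_isDomain _

/-! If `a ∈ A` lies in the extension of `Iⁿ` to `A⁺`, it satisfies an integral equation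
`aᵉ + c₁ aᵉ⁻¹ + ⋯ + cₑ = 0` with `cⱼ ∈ (Iⁿ)ʲ`. For `I = (z₁, …, z_d)` the order of vanishing is a
valuation which is at least `nj` on `(Iⁿ)ʲ`, so `a` has order at least `n`; hence `⋂ (I A⁺)ⁿ`
meets `A` in `0`, and so vanishes because `A⁺` is an integral domain integral over `A`.
To lift this to Witt vectors, note that the Witt vectors whose first `m` coefficients lie in an
ideal `K` form an ideal; for `K = (I A⁺)ⁿ` it contains `pᵐ` and all `n`-fold products of the `[zᵢ]`,
hence `Jᵐ⁺ⁿ`. -/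

section AddValuation

variable {A : Type*} [CommRing A] (v : AddValuation A ℕ∞) {I : Ideal A}

theorem nsmul_le_addValuation_of_mem_pow {γ : ℕ∞} (hI : ∀ a ∈ I, γ ≤ v a) {n : ℕ} {a : A}
    (ha : a ∈ I ^ n) : n • γ ≤ v a := by
  induction n generalizing a with
  | zero => simp only [zero_smul, zero_le]
  | succ n ih =>
    rw [pow_succ] at ha
    induction ha using Submodule.mul_induction_on' with
    | mem_mul_mem b hb c hc =>
      rw [v.map_mul, succ_nsmul]
      exact add_le_add (ih hb) (hI c hc)
    | add b _ c _ hb hc => exact v.map_le_add hb hc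

theorem addValuation_pow_ne_top {a : A} (ha : v a ≠ ⊤) (n : ℕ) : v (a ^ n) ≠ ⊤ := by
  rw [v.map_pow, nsmul_eq_mul]
  exact WithTop.mul_ne_top (ENat.natCast_ne_top n) ha

theorem addValuation_pow_lt_of_mem_pow_sub {γ : ℕ∞} (hI : ∀ a ∈ I, γ ≤ v a) {a c : A}
    (ha : v a < γ) {e i : ℕ} (hi : i < e) (hc : c ∈ I ^ (e - i)) : v (a ^ e) < v (c * a ^ i) := by
  have hlt : v (a ^ (e - i)) < v c := by
    refine lt_of_lt_of_le ?_ (nsmul_le_addValuation_of_mem_pow v hI hc)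
    rw [v.map_pow, nsmul_eq_mul, nsmul_eq_mul]
    exact ENat.mul_right_strictMono (Nat.cast_ne_zero.mpr (Nat.sub_ne_zero_of_lt hi))
      (ENat.natCast_ne_top _) ha
  rw [← pow_sub_mul_pow a hi.le, v.map_mul, v.map_mul]
  exact (ENat.add_lt_add_iff_right (addValuation_pow_ne_top v ha.ne_top i)).mpr hlt

variable {S : Type*} [CommRing S] [Algebra A S] [Algebra.IsIntegral A S] [FaithfulSMul A S]

theorem le_addValuation_of_algebraMap_mem_map {γ : ℕ∞} (hI : ∀ a ∈ I, γ ≤ v a) {a : A}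
    (ha : algebraMap A S a ∈ I.map (algebraMap A S)) : γ ≤ v a := by
  by_contra! hlt
  obtain ⟨P, hP, hPa, hcoeff⟩ :=
    Polynomial.exists_monic_aeval_eq_zero_forall_mem_pow_of_mem_map ha
  set e := P.natDegree
  have hroot : ∑ i ∈ Finset.range e, P.coeff i * a ^ i + a ^ e = 0 := by
    rw [Polynomial.aeval_algebraMap_apply, FaithfulSMul.algebraMap_eq_zero_iff,
      Polynomial.aeval_eq_sum_range, Finset.sum_range_succ, hP.coeff_natDegree, one_smul] at hPa
    exact hPa
  have hsum : v (a ^ e) < v (∑ i ∈ Finset.range e, P.coeff i * a ^ i) :=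
    v.map_lt_sum (addValuation_pow_ne_top v hlt.ne_top e) fun i hi ↦
      addValuation_pow_lt_of_mem_pow_sub v hI hlt (Finset.mem_range.mp hi) (hcoeff i)
  rw [eq_neg_of_add_eq_zero_left hroot, v.map_neg] at hsum
  exact lt_irrefl _ hsum

theorem iInf_map_pow_eq_bot_of_one_le_addValuation [IsDomain S] (hv : ∀ a, v a = ⊤ → a = 0)
    (hI : ∀ a ∈ I, 1 ≤ v a) : ⨅ n : ℕ, I.map (algebraMap A S) ^ n = ⊥ := by
  have : Nontrivial A := (algebraMap A S).domain_nontrivial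
  refine Ideal.eq_bot_of_comap_eq_bot (R := A) (eq_bot_iff.mpr fun a ha ↦ hv a ?_)
  rw [Ideal.mem_comap, Ideal.mem_iInf] at ha
  refine ENat.eq_top_iff_forall_ge.mpr fun n ↦ ?_
  refine le_addValuation_of_algebraMap_mem_map (S := S) v (I := I ^ n) (fun b hb ↦ ?_) ?_
  · simpa only [nsmul_one] using nsmul_le_addValuation_of_mem_pow v hI hb
  · rw [Ideal.map_pow]
    exact ha n

end AddValuation

section MvPowerSeries

variable {σ R : Type*} [CommRing R]

theorem one_le_order_of_mem_span_range_X {f : MvPowerSeries σ R}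
    (hf : f ∈ Ideal.span (Set.range (MvPowerSeries.X : σ → MvPowerSeries σ R))) :
    1 ≤ f.order := by
  rw [MvPowerSeries.one_le_order_iff_constCoeff_eq_zero, ← RingHom.mem_ker]
  refine Ideal.span_le.mpr ?_ hf
  rintro _ ⟨i, rfl⟩
  exact MvPowerSeries.constantCoeff_X i

variable [IsDomain R]

variable (σ R) in
/-- The order of vanishing at the origin, as an additive valuation on `R⟦σ⟧`. -/
def mvPowerSeriesOrderAddValuation : AddValuation (MvPowerSeries σ R) ℕ∞ :=
  AddValuation.of MvPowerSeries.order MvPowerSeries.order_zero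
    (MvPowerSeries.weightedOrder_one _) (fun _ _ ↦ MvPowerSeries.min_order_le_add)
    MvPowerSeries.order_mul

theorem iInf_span_algebraMap_X_pow_eq_bot (S : Type*) [CommRing S] [IsDomain S]
    [Algebra (MvPowerSeries σ R) S] [Algebra.IsIntegral (MvPowerSeries σ R) S]
    [FaithfulSMul (MvPowerSeries σ R) S] :
    ⨅ n : ℕ, Ideal.span (algebraMap (MvPowerSeries σ R) S '' Set.range MvPowerSeries.X) ^ n
      = ⊥ := by
  simp only [← Ideal.map_span]
  exact iInf_map_pow_eq_bot_of_one_le_addValuation (mvPowerSeriesOrderAddValuation σ R)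
    (fun _ ↦ MvPowerSeries.order_eq_top_iff.mp) fun _ ↦ one_le_order_of_mem_span_range_X

end MvPowerSeries

section WittVector

variable {p : ℕ} [Fact p.Prime] {S : Type*} [CommRing S]

variable (p) in
/-- The ideal of Witt vectors whose first `m` coefficients lie in `I`. It is defined as the kernel
of `𝕎 S → 𝕎 (S ⧸ I) → 𝕎ₘ (S ⧸ I)`, which makes it visibly an ideal. -/
def wittCoeffIdeal (I : Ideal S) (m : ℕ) : Ideal (WittVector p S) :=
  RingHom.ker ((WittVector.truncate m).comp (WittVector.map (Ideal.Quotient.mk I)))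

theorem mem_wittCoeffIdeal {I : Ideal S} {m : ℕ} {x : WittVector p S} :
    x ∈ wittCoeffIdeal p I m ↔ ∀ i < m, x.coeff i ∈ I := by
  rw [wittCoeffIdeal, RingHom.mem_ker, RingHom.comp_apply, ← RingHom.mem_ker,
    WittVector.mem_ker_truncate]
  simp only [WittVector.map_coeff, Ideal.Quotient.eq_zero_iff_mem]

theorem p_pow_mem_wittCoeffIdeal [CharP S p] (I : Ideal S) (m : ℕ) :
    (p : WittVector p S) ^ m ∈ wittCoeffIdeal p I m := by
  refine mem_wittCoeffIdeal.mpr fun i hi ↦ ?_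
  rw [← one_mul ((p : WittVector p S) ^ m), WittVector.mul_pow_charP_coeff_zero 1 hi]
  exact I.zero_mem

theorem teichmuller_mem_wittCoeffIdeal {I : Ideal S} {a : S} (ha : a ∈ I) (m : ℕ) :
    WittVector.teichmuller p a ∈ wittCoeffIdeal p I m := by
  rw [wittCoeffIdeal, RingHom.mem_ker, RingHom.comp_apply, WittVector.map_teichmuller,
    Ideal.Quotient.eq_zero_iff_mem.mpr ha, WittVector.teichmuller_zero, map_zero]

open scoped Pointwise in
theorem span_teichmuller_pow_le_wittCoeffIdeal (s : Set S) (n m : ℕ) :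
    Ideal.span (WittVector.teichmuller p '' s) ^ n ≤ wittCoeffIdeal p (Ideal.span s ^ n) m := by
  simp only [Ideal.span, Submodule.span_pow, ← Set.image_pow]
  refine Submodule.span_le.mpr ?_
  rintro _ ⟨a, ha, rfl⟩
  exact teichmuller_mem_wittCoeffIdeal (Submodule.subset_span ha) m

theorem span_p_union_teichmuller_pow_le_wittCoeffIdeal [CharP S p] (s : Set S) (m n : ℕ) :
    Ideal.span ({(p : WittVector p S)} ∪ WittVector.teichmuller p '' s) ^ (m + n) ≤
      wittCoeffIdeal p (Ideal.span s ^ n) m := by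
  rw [Ideal.span_union]
  refine Ideal.sup_pow_add_le_pow_sup_pow.trans
    (sup_le ?_ (span_teichmuller_pow_le_wittCoeffIdeal s n m))
  rw [Ideal.span_singleton_pow, Ideal.span_singleton_le_iff_mem]
  exact p_pow_mem_wittCoeffIdeal _ m

theorem iInf_span_p_union_teichmuller_pow_eq_bot [CharP S p] {s : Set S}
    (hs : ⨅ n : ℕ, Ideal.span s ^ n = ⊥) :
    ⨅ n : ℕ, Ideal.span ({(p : WittVector p S)} ∪ WittVector.teichmuller p '' s) ^ n = ⊥ := by
  refine eq_bot_iff.mpr fun x hx ↦ Ideal.mem_bot.mpr (WittVector.ext fun i ↦ ?_)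
  rw [WittVector.zero_coeff, ← Ideal.mem_bot, ← hs, Ideal.mem_iInf]
  intro n
  have hmem := span_p_union_teichmuller_pow_le_wittCoeffIdeal s (i + 1) n
    ((Ideal.mem_iInf).mp hx (i + 1 + n))
  exact mem_wittCoeffIdeal.mp hmem i i.lt_succ_self

end WittVector

theorem faithfulSMul_integralClosure_algebraicClosure_fractionRing (A : Type*) [CommRing A]
    [IsDomain A] :
    FaithfulSMul A (integralClosure A (AlgebraicClosure (FractionRing A))) :=
  have := FaithfulSMul.trans A (FractionRing A) (AlgebraicClosure (FractionRing A))
  FaithfulSMul.tower_bot A _ (AlgebraicClosure (FractionRing A))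

theorem iInf_one_le_pow_eq_iInf_pow {A : Type*} [CommSemiring A] (I : Ideal A) :
    ⨅ (n : ℕ) (_ : 1 ≤ n), I ^ n = ⨅ n : ℕ, I ^ n :=
  (iInf_ge_eq_iInf_nat_add (I ^ ·) 1).trans
    (Antitone.iInf_nat_add (fun _ _ ↦ Ideal.pow_le_pow_right) 1)

theorem witt_of_absolute_integral_closure_adically_separated_general
    (p : ℕ) [Fact p.Prime] {σ R S : Type*} [CommRing R] [IsDomain R] [CharP R p]
    [CommRing S] [IsDomain S] [Algebra (MvPowerSeries σ R) S]
    [Algebra.IsIntegral (MvPowerSeries σ R) S] [FaithfulSMul (MvPowerSeries σ R) S] :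
    (⨅ (n : ℕ) (_ : 1 ≤ n),
      (Ideal.span
        ({(p : WittVector p S)} ∪
          Set.range fun i : σ =>
            WittVector.teichmuller p
              (algebraMap (MvPowerSeries σ R) S (MvPowerSeries.X i))) : Ideal _) ^ n) = ⊥ := by
  have : CharP (MvPowerSeries σ R) p := charP_of_injective_ringHom MvPowerSeries.C_injective p
  have : CharP S p :=
    charP_of_injective_algebraMap (FaithfulSMul.algebraMap_injective (MvPowerSeries σ R) S) p
  have hrange : (Set.range fun i : σ ↦
      WittVector.teichmuller p (algebraMap (MvPowerSeries σ R) S (MvPowerSeries.X i))) =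
      WittVector.teichmuller p '' (algebraMap (MvPowerSeries σ R) S '' Set.range MvPowerSeries.X) :=
    by simp only [← Set.range_comp, Function.comp_def]
  rw [iInf_one_le_pow_eq_iInf_pow, hrange]
  exact iInf_span_p_union_teichmuller_pow_eq_bot (iInf_span_algebraMap_X_pow_eq_bot S)

/-- Let `k` be a perfect field of characteristic `p`, `A = k[[z₁, …, z_d]]`
(`d ≥ 1`), `A⁺` the absolute integral closure of `A`, and `J ⊆ 𝕎(A⁺)` the ideal generated by
`p` and the Teichmüller lifts `[z₁], …, [z_d]`. Then `𝕎(A⁺)` is `J`-adically separated: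
`⋂_{n ≥ 1} Jⁿ = 0`. -/
theorem witt_of_absolute_integral_closure_adically_separated
    (p : ℕ) [Fact p.Prime] (k : Type*) [Field k] [CharP k p] [PerfectRing k p]
    (d : ℕ) (hd : 1 ≤ d) :
    (⨅ (n : ℕ) (_ : 1 ≤ n),
      (Ideal.span
        ({(p : WittVector p
            ↥(integralClosure (MvPowerSeries (Fin d) k)
                (AlgebraicClosure (FractionRing (MvPowerSeries (Fin d) k)))))} ∪
          Set.range fun i : Fin d =>
            WittVector.teichmuller p
              (algebraMap (MvPowerSeries (Fin d) k)
                ↥(integralClosure (MvPowerSeries (Fin d) k)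
                    (AlgebraicClosure (FractionRing (MvPowerSeries (Fin d) k))))
                (MvPowerSeries.X i))) : Ideal _) ^ n) = ⊥ := by
  have := faithfulSMul_integralClosure_algebraicClosure_fractionRing (MvPowerSeries (Fin d) k)
  exact witt_of_absolute_integral_closure_adically_separated_general p (R := k)

end
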